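/- Let d ≥ 1, let g ∈ C_b^∞(ℝ^d), let γ ∈ ℕ^d be a multi-index, and let B₁, B₂ be bounded subsets of 𝒢(ℝ^d). Then the family {π₁ *_{g,γ} π₂ : π₁ ∈ B₁, π₂ ∈ B₂} is a bounded subset of 𝓗_{|γ|}(ℝ^d): for every (s,t) ∈ 𝒯₁ and every π₁ ∈ B₁, π₂ ∈ B₂ the function (x,y) ↦ (π₁ *_{g,γ} π₂)(s,t,x,y) is infinitely differentiable, and for each pair of multi-indices α, β ∈ ℕ^d there exist constants c₁ ≥ 0 and c₂ > 0, independent of π₁ ∈ B₁ and π₂ ∈ B₂, such that |∂_x^α ∂_y^β (π₁ *_{g,γ} π₂)(s,t,x,y)| ≤ c₁ t^{−(|α|+|β|+d+|γ|)/2} exp(−c₂‖x−y‖²/t) for all (s,t) ∈ 𝒯₁ and x, y ∈ ℝ^d. -/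

import Mathlib

open MeasureTheory Real

noncomputable section

/-- `ℝ^d` with the Euclidean norm. -/
abbrev Eu (d : ℕ) := EuclideanSpace ℝ (Fin d)

/-- Iterated partial derivative along a list of coordinate directions. -/
noncomputable def pderivs {d : ℕ} : List (Fin d) → (Eu d → ℝ) → Eu d → ℝ
  | [], f => f
  | i :: l, f => pderivs l fun x => fderiv ℝ f x (EuclideanSpace.single i 1)

/-- The list of coordinates (with multiplicities) associated to a multi-index `m : ℕ^d`. -/
def mToList {d : ℕ} (m : Fin d → ℕ) : List (Fin d) :=
  (List.finRange d).flatMap fun i => List.replicate (m i) i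

/-- The partial derivative `∂^m` associated to a multi-index `m : ℕ^d`. -/
noncomputable def pderivM {d : ℕ} (m : Fin d → ℕ) (f : Eu d → ℝ) : Eu d → ℝ :=
  pderivs (mToList m) f

/-- The length `|m| = m₁ + ⋯ + m_d` of a multi-index. -/
def mlen {d : ℕ} (m : Fin d → ℕ) : ℕ := ∑ i, m i

/-- Mixed partial derivative `∂_x^α ∂_y^β f(x,y)` of a function of two `ℝ^d` variables. -/
noncomputable def D2 {d : ℕ} (α β : Fin d → ℕ) (f : Eu d → Eu d → ℝ) (x y : Eu d) : ℝ :=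
  pderivM α (fun x' => pderivM β (f x') y) x

/-- The space convolution `(π₁ *_{g,γ} π₂)(s,t,x,y) = ∫ g(z) π₁(s,x,z) ∂_z^γ π₂(t-s,z,y) dz`. -/
noncomputable def convG {d : ℕ} (g : Eu d → ℝ) (γ : Fin d → ℕ)
    (π₁ π₂ : ℝ → Eu d → Eu d → ℝ) (s t : ℝ) (x y : Eu d) : ℝ :=
  ∫ z : Eu d, g z * (π₁ s x z * pderivM γ (fun z' => π₂ (t - s) z' y) z)

section Helpers

variable {E : Type} [NormedAddCommGroup E] [NormedSpace ℝ E]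

/-- Iterated directional derivatives. -/
def ddv {ι : Type} (v : ι → E) : List ι → (E → ℝ) → E → ℝ
  | [], f => f
  | i :: l, f => ddv v l fun x => fderiv ℝ f x (v i)

theorem smooth_dir {f : E → ℝ} (hf : ContDiff ℝ (⊤ : ℕ∞) f) (v : E) :
    ContDiff ℝ (⊤ : ℕ∞) fun x => fderiv ℝ f x v :=
  (hf.fderiv_right (m := (⊤ : ℕ∞)) le_rfl).clm_apply contDiff_const

theorem smooth_ddv {ι : Type} (v : ι → E) (l : List ι) {f : E → ℝ}
    (hf : ContDiff ℝ (⊤ : ℕ∞) f) : ContDiff ℝ (⊤ : ℕ∞) (ddv v l f) := by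
  induction l generalizing f with
  | nil => exact hf
  | cons i l ih => exact ih (smooth_dir hf (v i))

theorem ddv_append {ι : Type} (v : ι → E) (l l' : List ι) (f : E → ℝ) :
    ddv v (l ++ l') f = ddv v l' (ddv v l f) := by
  induction l generalizing f with
  | nil => rfl
  | cons i l ih => exact ih _

theorem ddv_map {ι κ : Type} (v : ι → E) (e : κ → ι) (l : List κ) (f : E → ℝ) :
    ddv v (l.map e) f = ddv (fun i => v (e i)) l f := by
  induction l generalizing f with
  | nil => rfl
  | cons i l ih => exact ih _

theorem pderivs_eq {d : ℕ} (l : List (Fin d)) (f : Eu d → ℝ) :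
    pderivs l f = ddv (fun i => EuclideanSpace.single i (1 : ℝ)) l f := by
  induction l generalizing f with
  | nil => rfl
  | cons i l ih => exact ih _

theorem norm_dir_le {f : E → ℝ} (hf : ContDiff ℝ (⊤ : ℕ∞) f) {v : E} (hv : ‖v‖ ≤ 1)
    (k : ℕ) (x : E) :
    ‖iteratedFDeriv ℝ k (fun x => fderiv ℝ f x v) x‖ ≤ ‖iteratedFDeriv ℝ (k + 1) f x‖ := by
  rw [← norm_iteratedFDeriv_fderiv]
  have h := norm_iteratedFDeriv_clm_apply_const (c := v) (n := k) (x := x)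
    (hf.fderiv_right (m := (⊤ : ℕ∞)) le_rfl).contDiffAt (by exact_mod_cast le_top)
  exact h.trans (mul_le_of_le_one_left (norm_nonneg _) hv)

theorem norm_ddv_le {ι : Type} {v : ι → E} (hv : ∀ i, ‖v i‖ ≤ 1) (l : List ι) {f : E → ℝ}
    (hf : ContDiff ℝ (⊤ : ℕ∞) f) (k : ℕ) (x : E) :
    ‖iteratedFDeriv ℝ k (ddv v l f) x‖ ≤ ‖iteratedFDeriv ℝ (k + l.length) f x‖ := by
  induction l generalizing f with
  | nil => exact le_rfl
  | cons i l ih =>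
    refine (ih (smooth_dir hf (v i))).trans ?_
    exact norm_dir_le hf (hv i) _ _

theorem abs_ddv_le {ι : Type} {v : ι → E} (hv : ∀ i, ‖v i‖ ≤ 1) (l : List ι) {f : E → ℝ}
    (hf : ContDiff ℝ (⊤ : ℕ∞) f) (x : E) :
    |ddv v l f x| ≤ ‖iteratedFDeriv ℝ l.length f x‖ := by
  have := norm_ddv_le hv l hf 0 x
  rw [norm_iteratedFDeriv_zero, zero_add] at this
  exact this

theorem ddv_perm {ι : Type} (v : ι → E) {l l' : List ι} (h : l.Perm l') {f : E → ℝ}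
    (hf : ContDiff ℝ (⊤ : ℕ∞) f) : ddv v l f = ddv v l' f := by
  induction h generalizing f with
  | nil => rfl
  | cons i _ ih => exact ih (smooth_dir hf (v i))
  | trans _ _ ih1 ih2 => exact (ih1 hf).trans (ih2 hf)
  | swap i j l =>
    show ddv v l _ = ddv v l _
    congr 1
    ext x
    have hd : DifferentiableAt ℝ (fderiv ℝ f) x :=
      (hf.fderiv_right (m := (⊤ : ℕ∞)) le_rfl).contDiffAt.differentiableAt (by simp)
    rw [fderiv_clm_apply hd (differentiableAt_const _),
      fderiv_clm_apply hd (differentiableAt_const _)]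
    have := (hf.contDiffAt (x := x)).isSymmSndFDerivAt
      (by simp only [minSmoothness_of_isRCLikeNormedField]
          exact WithTop.coe_le_coe.2 (le_top (a := (2 : ℕ∞))))
    simpa using this.eq _ _

/-- Bounding the full derivative by directional derivatives along a basis. -/
theorem norm_iter_le {ι : Type} [Fintype ι] (v : ι → E) (φ : ι → E →L[ℝ] ℝ)
    (hφ : ∀ i, ‖φ i‖ ≤ 1) (hb : ∀ x, x = ∑ i, φ i x • v i) (n : ℕ) {f : E → ℝ}
    (hf : ContDiff ℝ (⊤ : ℕ∞) f) (x : E) (M : ℝ)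
    (hM : ∀ l : List ι, l.length = n → |ddv v l f x| ≤ M) :
    ‖iteratedFDeriv ℝ n f x‖ ≤ (Fintype.card ι : ℝ) ^ n * M := by
  induction n generalizing f with
  | zero =>
    rw [norm_iteratedFDeriv_zero]
    simpa [ddv] using hM [] rfl
  | succ n ih =>
    have hi : ∀ i, ‖iteratedFDeriv ℝ n (fun x => fderiv ℝ f x (v i)) x‖ ≤
        (Fintype.card ι : ℝ) ^ n * M := fun i =>
      ih (smooth_dir hf (v i)) fun l hl => hM (i :: l) (by simp [hl])
    have he : fderiv ℝ f = fun x => ∑ i, (ContinuousLinearMap.smulRightL ℝ E ℝ (φ i))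
        (fderiv ℝ f x (v i)) := by
      ext y u
      conv_lhs => rw [hb u]
      simp
    have hc : ∀ i, ContDiff ℝ (⊤ : ℕ∞) fun x =>
        (ContinuousLinearMap.smulRightL ℝ E ℝ (φ i)) (fderiv ℝ f x (v i)) := fun i =>
      (ContinuousLinearMap.contDiff _).comp (smooth_dir hf (v i))
    rw [← norm_iteratedFDeriv_fderiv, he, iteratedFDeriv_sum
      (fun i _ => (hc i).of_le (by exact_mod_cast le_top)), Finset.sum_apply]
    refine (norm_sum_le _ _).trans ?_
    have : ∀ i ∈ Finset.univ, ‖iteratedFDeriv ℝ n (fun x =>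
        (ContinuousLinearMap.smulRightL ℝ E ℝ (φ i)) (fderiv ℝ f x (v i))) x‖ ≤
        (Fintype.card ι : ℝ) ^ n * M := by
      intro i _
      have h1 := (ContinuousLinearMap.smulRightL ℝ E ℝ (φ i)).norm_iteratedFDeriv_comp_left
        (smooth_dir hf (v i)).contDiffAt (x := x) (n := n) (by exact_mod_cast le_top)
      refine h1.trans ((mul_le_of_le_one_left (norm_nonneg _) ?_).trans (hi i))
      refine ContinuousLinearMap.opNorm_le_bound _ zero_le_one fun r => ?_
      refine (ContinuousLinearMap.norm_smulRight_apply (φ i) r).le.trans ?_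
      exact mul_le_mul_of_nonneg_right (hφ i) (norm_nonneg _)
    refine (Finset.sum_le_sum this).trans (le_of_eq ?_)
    simp [pow_succ]; ring

/-- All derivatives up to order `n` at `x` are at most `A`. -/
def Bd {F : Type} [NormedAddCommGroup F] [NormedSpace ℝ F] (n : ℕ) (f : E → F) (x : E)
    (A : ℝ) : Prop := ∀ k ≤ n, ‖iteratedFDeriv ℝ k f x‖ ≤ A

theorem Bd.mono {n m : ℕ} {f : E → ℝ} {x : E} {A B : ℝ} (h : Bd n f x A) (hm : m ≤ n)
    (hAB : A ≤ B) : Bd m f x B := fun k hk => (h k (hk.trans hm)).trans hAB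

theorem Bd.mul {n : ℕ} {f g : E → ℝ} {x : E} {A B : ℝ} (hf : ContDiff ℝ (⊤ : ℕ∞) f)
    (hg : ContDiff ℝ (⊤ : ℕ∞) g) (h : Bd n f x A) (h' : Bd n g x B) :
    Bd n (fun y => f y * g y) x (2 ^ n * (A * B)) := by
  intro k hk
  have hA : 0 ≤ A := (norm_nonneg _).trans (h 0 (Nat.zero_le _))
  have hB : 0 ≤ B := (norm_nonneg _).trans (h' 0 (Nat.zero_le _))
  refine (norm_iteratedFDeriv_mul_le hf hg x (n := k) (by exact_mod_cast le_top)).trans ?_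
  calc _ ≤ ∑ i ∈ Finset.range (k + 1), (k.choose i : ℝ) * (A * B) := by
        refine Finset.sum_le_sum fun i hi => ?_
        rw [mul_assoc]
        refine mul_le_mul_of_nonneg_left ?_ (Nat.cast_nonneg _)
        exact mul_le_mul (h i (by simp at hi; omega)) (h' (k - i) (by omega)) (norm_nonneg _) hA
    _ = 2 ^ k * (A * B) := by
        rw [← Finset.sum_mul, ← Nat.cast_sum, Nat.sum_range_choose]; push_cast; ring
    _ ≤ _ := by
        refine mul_le_mul_of_nonneg_right ?_ (mul_nonneg hA hB)
        exact pow_le_pow_right₀ (by norm_num) hk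

theorem Bd.ddv {ι : Type} {v : ι → E} (hv : ∀ i, ‖v i‖ ≤ 1) {l : List ι} {f : E → ℝ}
    (hf : ContDiff ℝ (⊤ : ℕ∞) f) {n : ℕ} {x : E} {A : ℝ} (h : Bd (n + l.length) f x A) :
    Bd n (ddv v l f) x A :=
  fun k hk => (norm_ddv_le hv l hf k x).trans (h _ (by omega))

theorem Bd.comp_add {n : ℕ} {f : E → ℝ} {x a : E} {A : ℝ} (h : Bd n f (x + a) A) :
    Bd n (fun y => f (y + a)) x A := fun k hk => by
  rw [iteratedFDeriv_comp_add_right]; exact h k hk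

theorem Bd.comp_clm {G : Type} [NormedAddCommGroup G] [NormedSpace ℝ G] {n : ℕ} {f : E → ℝ}
    (hf : ContDiff ℝ (⊤ : ℕ∞) f) (L : G →L[ℝ] E) (hL : ‖L‖ ≤ 1) {x : G} {A : ℝ}
    (h : Bd n f (L x) A) : Bd n (fun y => f (L y)) x A := fun k hk => by
  have := L.iteratedFDeriv_comp_right hf x (i := k) (by exact_mod_cast le_top)
  show ‖iteratedFDeriv ℝ k (f ∘ L) x‖ ≤ A
  rw [this]
  refine (ContinuousMultilinearMap.norm_compContinuousLinearMap_le _ _).trans ?_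
  refine (mul_le_of_le_one_right (norm_nonneg _) ?_).trans (h k hk)
  exact Finset.prod_le_one (fun _ _ => norm_nonneg _) fun _ _ => hL

theorem Bd.const_mul {n : ℕ} {f : E → ℝ} {x : E} {A : ℝ} (hf : ContDiff ℝ (⊤ : ℕ∞) f)
    (c : ℝ) (h : Bd n f x A) : Bd n (fun y => c * f y) x (|c| * A) := fun k hk => by
  have := iteratedFDeriv_const_smul_apply (𝕜 := ℝ) (a := c) (i := k) (f := f) (x := x)
    (hf.contDiffAt.of_le (by exact_mod_cast le_top))
  show ‖iteratedFDeriv ℝ k (c • f) x‖ ≤ _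
  rw [this, norm_smul, Real.norm_eq_abs]
  exact mul_le_mul_of_nonneg_left (h k hk) (abs_nonneg _)

variable {W : Type} [NormedAddCommGroup W] [NormedSpace ℝ W] [MeasurableSpace W] [BorelSpace W]
  [FiniteDimensional ℝ W]

theorem hasFDerivAt_param [FiniteDimensional ℝ E] {F : Type} [NormedAddCommGroup F]
    [NormedSpace ℝ F] [CompleteSpace F]
    (μ : Measure W) (Φ : E → W → F)
    (hΦ : ContDiff ℝ (⊤ : ℕ∞) fun p : E × W => Φ p.1 p.2)
    (hb : ∀ k : ℕ, ∃ b : W → ℝ, Integrable b μ ∧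
      ∀ x w, ‖iteratedFDeriv ℝ k (fun x => Φ x w) x‖ ≤ b w) (x : E) :
    HasFDerivAt (fun x => ∫ w, Φ x w ∂μ) (∫ w, fderiv ℝ (fun x => Φ x w) x ∂μ) x := by
  obtain ⟨b0, hb0, h0⟩ := hb 0
  obtain ⟨b1, hb1, h1⟩ := hb 1
  have hcont : ∀ x, Continuous (Φ x) := fun x =>
    hΦ.continuous.comp (Continuous.prodMk_right x)
  have hd : ∀ w, ContDiff ℝ (⊤ : ℕ∞) fun x => Φ x w := fun w =>
    hΦ.comp (contDiff_id.prodMk contDiff_const)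
  have hd' : ContDiff ℝ (⊤ : ℕ∞) fun p : E × W => fderiv ℝ (fun x => Φ x p.2) p.1 := by
    refine ContDiff.fderiv (f := fun (p : E × W) x => Φ x p.2) (m := (⊤ : ℕ∞)) ?_
      contDiff_fst le_rfl
    exact hΦ.comp (contDiff_snd.prodMk (contDiff_snd.comp contDiff_fst))
  refine hasFDerivAt_integral_of_dominated_of_fderiv_le (𝕜 := ℝ) (s := Set.univ) (bound := b1)
    (F' := fun x w => fderiv ℝ (fun x => Φ x w) x)
    Filter.univ_mem (.of_forall fun x => (hcont x).aestronglyMeasurable) ?_ ?_ ?_ hb1 ?_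
  · refine hb0.mono' (hcont x).aestronglyMeasurable (.of_forall fun w => ?_)
    simpa using h0 x w
  · exact (hd'.continuous.comp (Continuous.prodMk_right x)).aestronglyMeasurable
  · refine .of_forall fun w x _ => ?_
    have := h1 x w
    rwa [← norm_iteratedFDeriv_fderiv, norm_iteratedFDeriv_zero] at this
  · exact .of_forall fun w x _ => ((hd w).contDiffAt.differentiableAt (by simp)).hasFDerivAt

theorem param_main [FiniteDimensional ℝ E] (n : ℕ) {F : Type} [NormedAddCommGroup F]
    [NormedSpace ℝ F] [CompleteSpace F]
    (μ : Measure W) (Φ : E → W → F)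
    (hΦ : ContDiff ℝ (⊤ : ℕ∞) fun p : E × W => Φ p.1 p.2)
    (hb : ∀ k : ℕ, ∃ b : W → ℝ, Integrable b μ ∧
      ∀ x w, ‖iteratedFDeriv ℝ k (fun x => Φ x w) x‖ ≤ b w) :
    ContDiff ℝ n (fun x => ∫ w, Φ x w ∂μ) ∧
    ∀ x, ‖iteratedFDeriv ℝ n (fun x => ∫ w, Φ x w ∂μ) x‖ ≤
      ∫ w, ‖iteratedFDeriv ℝ n (fun x => Φ x w) x‖ ∂μ := by
  induction n generalizing F with
  | zero =>
    refine ⟨?_, fun x => ?_⟩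
    · have : Continuous (fun x => ∫ w, Φ x w ∂μ) := continuous_iff_continuousAt.2 fun x =>
        (hasFDerivAt_param μ Φ hΦ hb x).continuousAt
      exact_mod_cast contDiff_zero.2 this
    · simp only [norm_iteratedFDeriv_zero]
      exact norm_integral_le_integral_norm _
  | succ n ih =>
    have hd' : ContDiff ℝ (⊤ : ℕ∞) fun p : E × W => fderiv ℝ (fun x => Φ x p.2) p.1 := by
      refine ContDiff.fderiv (f := fun (p : E × W) x => Φ x p.2) (m := (⊤ : ℕ∞)) ?_
        contDiff_fst le_rfl
      exact hΦ.comp (contDiff_snd.prodMk (contDiff_snd.comp contDiff_fst))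
    have hfd : fderiv ℝ (fun x => ∫ w, Φ x w ∂μ) =
        fun x => ∫ w, fderiv ℝ (fun x => Φ x w) x ∂μ :=
      funext fun x => (hasFDerivAt_param μ Φ hΦ hb x).fderiv
    obtain ⟨h1, h2⟩ := ih (fun x w => fderiv ℝ (fun x => Φ x w) x) hd' (fun k => by
      obtain ⟨b, hbi, hb'⟩ := hb (k + 1)
      refine ⟨b, hbi, fun x w => ?_⟩
      have := hb' x w
      rwa [← norm_iteratedFDeriv_fderiv] at this)
    refine ⟨?_, fun x => ?_⟩
    · push_cast
      refine contDiff_succ_iff_fderiv.2 ⟨fun x =>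
        (hasFDerivAt_param μ Φ hΦ hb x).differentiableAt, by simp, ?_⟩
      rw [hfd]; exact h1
    · rw [← norm_iteratedFDeriv_fderiv, hfd]
      refine (h2 x).trans (le_of_eq ?_)
      congr 1
      ext w
      exact norm_iteratedFDeriv_fderiv

theorem gauss_integrable {d : ℕ} {c : ℝ} (hc : 0 < c) :
    Integrable (fun w : Eu d => Real.exp (-c * ‖w‖ ^ 2)) := by
  have h := GaussianFourier.integrable_cexp_neg_mul_sq_norm_add (V := Eu d) (b := (c : ℂ))
    (by simpa using hc) 0 0
  have := h.norm
  refine this.congr (.of_forall fun w => ?_)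
  simp only [Complex.norm_exp]
  congr 1
  simp
  norm_cast
  simp

/-- Iterated integration by parts. -/
theorem ibp {d : ℕ} (l : List (Fin d)) (f q : Eu d → ℝ) (hf : ContDiff ℝ (⊤ : ℕ∞) f)
    (hq : ContDiff ℝ (⊤ : ℕ∞) q)
    (hfb : ∀ k : ℕ, ∃ C : ℝ, ∀ z, ‖iteratedFDeriv ℝ k f z‖ ≤ C)
    (hqb : ∀ k : ℕ, ∃ b : Eu d → ℝ, Integrable b ∧ ∀ z, ‖iteratedFDeriv ℝ k q z‖ ≤ b z) :
    ∫ z, f z * ddv (fun i => EuclideanSpace.single i (1 : ℝ)) l q z =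
      (-1) ^ l.length * ∫ z, ddv (fun i => EuclideanSpace.single i (1 : ℝ)) l.reverse f z * q z := by
  have hv : ∀ i : Fin d, ‖(EuclideanSpace.single i (1 : ℝ) : Eu d)‖ ≤ 1 := fun i => by simp
  have hintg : ∀ f q : Eu d → ℝ, Continuous f → Continuous q → (∃ C : ℝ, ∀ z, |f z| ≤ C) →
      (∃ b : Eu d → ℝ, Integrable b ∧ ∀ z, |q z| ≤ b z) → Integrable fun z => f z * q z := by
    rintro f q hf hq ⟨C, hC⟩ ⟨b, hb, hqb⟩
    refine (hb.const_mul C).mono' (hf.mul hq).aestronglyMeasurable (.of_forall fun z => ?_)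
    rw [norm_mul]
    exact mul_le_mul (hC z) (hqb z) (norm_nonneg _) ((abs_nonneg _).trans (hC z))
  induction l generalizing q with
  | nil => simp [ddv]
  | cons i l ih =>
    have hq' := smooth_dir hq (EuclideanSpace.single i (1 : ℝ))
    have h1 := ih (fun z => fderiv ℝ q z (EuclideanSpace.single i (1 : ℝ))) hq' (fun k => by
      obtain ⟨b, hbi, hb'⟩ := hqb (k + 1)
      exact ⟨b, hbi, fun z => (norm_dir_le hq (hv i) k z).trans (hb' z)⟩)
    show ∫ z, f z * ddv _ l (fun z => fderiv ℝ q z (EuclideanSpace.single i (1 : ℝ))) z = _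
    rw [h1]
    have hfl := smooth_ddv (fun i => EuclideanSpace.single i (1 : ℝ)) l.reverse hf
    rw [integral_mul_fderiv_eq_neg_fderiv_mul_of_integrable]
    · rw [List.reverse_cons, List.length_cons, pow_succ]
      simp only [ddv_append]
      simp only [ddv]
      ring
    · refine hintg _ _ (smooth_dir hfl _).continuous hq.continuous ?_ ?_
      · obtain ⟨C, hC⟩ := hfb (1 + l.reverse.length)
        refine ⟨C, fun z => le_trans ?_ ((norm_ddv_le hv l.reverse hf 1 z).trans (hC z))⟩
        have := norm_dir_le hfl (hv i) 0 z
        rwa [norm_iteratedFDeriv_zero, zero_add] at this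
      · obtain ⟨b, hbi, hb'⟩ := hqb 0
        exact ⟨b, hbi, fun z => by simpa using hb' z⟩
    · refine hintg _ _ hfl.continuous hq'.continuous ?_ ?_
      · obtain ⟨C, hC⟩ := hfb l.reverse.length
        exact ⟨C, fun z => (abs_ddv_le hv l.reverse hf z).trans (hC z)⟩
      · obtain ⟨b, hbi, hb'⟩ := hqb 1
        refine ⟨b, hbi, fun z => le_trans ?_ (hb' z)⟩
        have := norm_dir_le hq (hv i) 0 z
        rwa [norm_iteratedFDeriv_zero, zero_add] at this
    · refine hintg _ _ hfl.continuous hq.continuous ?_ ?_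
      · obtain ⟨C, hC⟩ := hfb l.reverse.length
        exact ⟨C, fun z => (abs_ddv_le hv l.reverse hf z).trans (hC z)⟩
      · obtain ⟨b, hbi, hb'⟩ := hqb 0
        exact ⟨b, hbi, fun z => by simpa using hb' z⟩
    · exact fun x _ => hfl.contDiffAt.differentiableAt (by simp)
    · exact fun x _ => hq.contDiffAt.differentiableAt (by simp)

theorem change_var {d : ℕ} (h : Eu d → ℝ) (x : Eu d) {σ : ℝ} (hσ : σ ≠ 0) :
    ∫ z, h z = ∫ w, |σ| ^ d * h (x + σ • w) := by
  rw [integral_const_mul, Measure.integral_comp_smul volume (fun w => h (x + w)) σ,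
    integral_add_left_eq_self h x]
  have : |σ| ^ d ≠ 0 := pow_ne_zero _ (abs_ne_zero.2 hσ)
  simp only [finrank_euclideanSpace, Fintype.card_fin, smul_eq_mul, abs_inv, abs_pow]
  field_simp

/-- The weighted triangle inequality behind the Chapman–Kolmogorov estimate. -/
theorem exp_bound {d : ℕ} {c τ t σ : ℝ} (hc : 0 < c) (hτ : 0 < τ) (ht : t = σ ^ 2 + τ)
    (x y w : Eu d) :
    Real.exp (-c * ‖x + σ • w - y‖ ^ 2 / τ) * Real.exp (-c * ‖w‖ ^ 2) ≤
      Real.exp (-(c / 2) * ‖x - y‖ ^ 2 / t) * Real.exp (-(c / 2) * ‖w‖ ^ 2) := by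
  have ht0 : 0 < t := by rw [ht]; positivity
  set a := ‖x + σ • w - y‖ with ha
  set b := ‖w‖ with hb
  have hb0 : 0 ≤ b := norm_nonneg _
  have ha0 : 0 ≤ a := norm_nonneg _
  have htri : ‖x - y‖ ≤ a + |σ| * b := by
    have : x - y = (x + σ • w - y) - σ • w := by abel
    rw [this]
    refine (norm_sub_le _ _).trans ?_
    rw [norm_smul, Real.norm_eq_abs]
  have hsq : ‖x - y‖ ^ 2 ≤ (a + |σ| * b) ^ 2 := pow_le_pow_left₀ (norm_nonneg _) htri 2
  have key : ‖x - y‖ ^ 2 / t ≤ a ^ 2 / τ + b ^ 2 := by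
    rw [div_le_iff₀ ht0]
    refine hsq.trans ?_
    have e : (a ^ 2 / τ + b ^ 2) * t - (a + |σ| * b) ^ 2 = (|σ| * a - τ * b) ^ 2 / τ := by
      rw [ht, ← sq_abs σ]; field_simp; ring
    have : 0 ≤ (|σ| * a - τ * b) ^ 2 / τ := by positivity
    linarith
  rw [← Real.exp_add, ← Real.exp_add, Real.exp_le_exp]
  have hat : 0 ≤ a ^ 2 / τ := by positivity
  have e1 : -c * a ^ 2 / τ = -c * (a ^ 2 / τ) := by ring
  have e2 : -(c / 2) * ‖x - y‖ ^ 2 / t = -(c / 2) * (‖x - y‖ ^ 2 / t) := by ring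
  rw [e1, e2]
  nlinarith

/-- The core estimate. -/
theorem core {d : ℕ} {H : Eu d × Eu d → ℝ} {F : Eu d → Eu d → ℝ} {σ τ t : ℝ}
    (hτ : 0 < τ) (ht : t = σ ^ 2 + τ)
    (hH : ContDiff ℝ (⊤ : ℕ∞) H) (hF : ContDiff ℝ (⊤ : ℕ∞) fun p : Eu d × Eu d => F p.1 p.2)
    (hHb : ∀ n, ∃ A, ∀ p, Bd n H p A)
    (hFb : ∀ n, ∃ B, ∃ c > (0 : ℝ), ∀ w x, Bd n (fun x => F x w) x (B * Real.exp (-c * ‖w‖ ^ 2))) :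
    ContDiff ℝ (⊤ : ℕ∞) (fun p : Eu d × Eu d => ∫ w, H (p.1 + σ • w, p.2) * F p.1 w) ∧
    ∀ n A B c, 0 < c → (∀ p : Eu d × Eu d, Bd n H p (A * Real.exp (-c * ‖p.1 - p.2‖ ^ 2 / τ))) →
      (∀ w x, Bd n (fun x => F x w) x (B * Real.exp (-c * ‖w‖ ^ 2))) →
      ∀ x y, ‖iteratedFDeriv ℝ n
          (fun p : Eu d × Eu d => ∫ w, H (p.1 + σ • w, p.2) * F p.1 w) (x, y)‖ ≤
        2 ^ n * (A * B) * (∫ w : Eu d, Real.exp (-(c / 2) * ‖w‖ ^ 2)) *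
          Real.exp (-(c / 2) * ‖x - y‖ ^ 2 / t) := by
  have hFw : ∀ w, ContDiff ℝ (⊤ : ℕ∞) fun x => F x w := fun w =>
    hF.comp (contDiff_id.prodMk contDiff_const)
  have hHw : ∀ w : Eu d, ContDiff ℝ (⊤ : ℕ∞) fun p : Eu d × Eu d => H (p.1 + σ • w, p.2) :=
    fun w => hH.comp ((contDiff_fst.add contDiff_const).prodMk contDiff_snd)
  have hprod : ∀ n (w : Eu d) (p : Eu d × Eu d) (A B : ℝ), Bd n H (p.1 + σ • w, p.2) A →
      Bd n (fun x => F x w) p.1 B →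
      Bd n (fun p : Eu d × Eu d => H (p.1 + σ • w, p.2) * F p.1 w) p (2 ^ n * (A * B)) := by
    intro n w p A B h1 h2
    refine Bd.mul (hHw w) ((hFw w).comp contDiff_fst) ?_ ?_
    · have : ∀ q : Eu d × Eu d, (q.1 + σ • w, q.2) = q + (σ • w, 0) := fun q => by
        ext <;> simp
      simp only [this] at h1 ⊢
      exact h1.comp_add
    · exact Bd.comp_clm (hFw w) (ContinuousLinearMap.fst ℝ (Eu d) (Eu d))
        (ContinuousLinearMap.norm_fst_le ..) h2
  have hΦ : ContDiff ℝ (⊤ : ℕ∞) fun p : (Eu d × Eu d) × Eu d =>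
      H (p.1.1 + σ • p.2, p.1.2) * F p.1.1 p.2 := by
    refine ContDiff.mul (hH.comp ?_) 
      (hF.comp (g := fun p : Eu d × Eu d => F p.1 p.2)
        (f := fun p : (Eu d × Eu d) × Eu d => (p.1.1, p.2)) ?_)
    · fun_prop
    · fun_prop
  have hb : ∀ k : ℕ, ∃ b : Eu d → ℝ, Integrable b volume ∧
      ∀ x w, ‖iteratedFDeriv ℝ k
        (fun p : Eu d × Eu d => H (p.1 + σ • w, p.2) * F p.1 w) x‖ ≤ b w := by
    intro k
    obtain ⟨A, hA⟩ := hHb k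
    obtain ⟨B, c, hc, hB⟩ := hFb k
    refine ⟨fun w => 2 ^ k * (A * (B * Real.exp (-c * ‖w‖ ^ 2))), ?_, fun p w => ?_⟩
    · exact (((gauss_integrable hc).const_mul B).const_mul A).const_mul _
    · exact hprod k w p _ _ (hA _) (hB w p.1) k le_rfl
  refine ⟨contDiff_infty.2 fun n => (param_main n volume _ hΦ hb).1, ?_⟩
  intro n A B c hc hA hB x y
  refine ((param_main n volume _ hΦ hb).2 (x, y)).trans ?_
  have hA0 : 0 ≤ A := by
    have := (norm_nonneg _).trans (hA 0 0 (Nat.zero_le _))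
    exact nonneg_of_mul_nonneg_left this (Real.exp_pos _)
  have hB0 : 0 ≤ B := by
    have := (norm_nonneg _).trans (hB 0 0 0 (Nat.zero_le _))
    exact nonneg_of_mul_nonneg_left this (Real.exp_pos _)
  have hpt : ∀ w, ‖iteratedFDeriv ℝ n
      (fun p : Eu d × Eu d => H (p.1 + σ • w, p.2) * F p.1 w) (x, y)‖ ≤
      2 ^ n * (A * B) * Real.exp (-(c / 2) * ‖x - y‖ ^ 2 / t) *
        Real.exp (-(c / 2) * ‖w‖ ^ 2) := by
    intro w
    refine (hprod n w (x, y) _ _ (hA _) (hB w x) n le_rfl).trans ?_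
    have := exp_bound hc hτ ht x y w
    calc _ = 2 ^ n * (A * B) * (Real.exp (-c * ‖x + σ • w - y‖ ^ 2 / τ) *
          Real.exp (-c * ‖w‖ ^ 2)) := by ring
      _ ≤ 2 ^ n * (A * B) * (Real.exp (-(c / 2) * ‖x - y‖ ^ 2 / t) *
          Real.exp (-(c / 2) * ‖w‖ ^ 2)) := by gcongr
      _ = _ := by ring
  refine (integral_mono_of_nonneg (.of_forall fun w => norm_nonneg _)
    ((gauss_integrable (half_pos hc)).const_mul _) (.of_forall hpt)).trans (le_of_eq ?_)
  rw [integral_const_mul]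
  ring

theorem count_mToList {d : ℕ} (m : Fin d → ℕ) (i : Fin d) : (mToList m).count i = m i := by
  unfold mToList
  rw [List.count_flatMap]
  have : (List.count i ∘ fun j => List.replicate (m j) j) = fun j => if j = i then m j else 0 := by
    ext j
    simp [List.count_replicate]
  rw [this, ← List.ofFn_eq_map, List.sum_ofFn]
  simp

theorem length_mToList {d : ℕ} (m : Fin d → ℕ) : (mToList m).length = mlen m := by
  unfold mToList mlen
  rw [List.length_flatMap, ← List.ofFn_eq_map, List.sum_ofFn]
  simp

/-- coordinate directions in the product space -/
def v2 (d : ℕ) : Fin d ⊕ Fin d → Eu d × Eu d :=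
  Sum.elim (fun i => (EuclideanSpace.single i (1 : ℝ), 0)) fun i => (0, EuclideanSpace.single i (1 : ℝ))

theorem norm_v2 {d : ℕ} (i : Fin d ⊕ Fin d) : ‖v2 d i‖ ≤ 1 := by
  cases i <;> simp [v2, Prod.norm_def]

theorem norm_v2_inl {d : ℕ} (i : Fin d) : ‖v2 d (Sum.inl i)‖ ≤ 1 := norm_v2 _

theorem norm_v2_inr {d : ℕ} (i : Fin d) : ‖v2 d (Sum.inr i)‖ ≤ 1 := norm_v2 _

theorem ddv_inr {d : ℕ} (l : List (Fin d)) {F : Eu d × Eu d → ℝ} (hF : ContDiff ℝ (⊤ : ℕ∞) F)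
    (x y : Eu d) :
    ddv (fun i => v2 d (Sum.inr i)) l F (x, y) = pderivs l (fun y' => F (x, y')) y := by
  induction l generalizing F with
  | nil => rfl
  | cons i l ih =>
    refine (ih (smooth_dir hF _)).trans ?_
    show pderivs l _ y = pderivs l _ y
    congr 1
    ext z
    have h1 : HasFDerivAt F (fderiv ℝ F (x, z)) (x, z) :=
      (hF.contDiffAt.differentiableAt (by simp)).hasFDerivAt
    have h2 := h1.comp z (hasFDerivAt_prodMk_right x z)
    have h3 : fderiv ℝ (fun y' => F (x, y')) z = _ := h2.fderiv
    rw [h3]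
    simp [v2]

theorem ddv_inl {d : ℕ} (l : List (Fin d)) {F : Eu d × Eu d → ℝ} (hF : ContDiff ℝ (⊤ : ℕ∞) F)
    (x y : Eu d) :
    ddv (fun i => v2 d (Sum.inl i)) l F (x, y) = pderivs l (fun x' => F (x', y)) x := by
  induction l generalizing F with
  | nil => rfl
  | cons i l ih =>
    refine (ih (smooth_dir hF _)).trans ?_
    show pderivs l _ x = pderivs l _ x
    congr 1
    ext z
    have h1 : HasFDerivAt F (fderiv ℝ F (z, y)) (z, y) :=
      (hF.contDiffAt.differentiableAt (by simp)).hasFDerivAt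
    have h2 := h1.comp z (hasFDerivAt_prodMk_left (𝕜 := ℝ) z y)
    have h3 : fderiv ℝ (fun x' => F (x', y)) z = _ := h2.fderiv
    rw [h3]
    simp [v2]

theorem D2_eq {d : ℕ} (α β : Fin d → ℕ) {f : Eu d → Eu d → ℝ}
    (hf : ContDiff ℝ (⊤ : ℕ∞) fun p : Eu d × Eu d => f p.1 p.2) (x y : Eu d) :
    D2 α β f x y = ddv (v2 d) ((mToList β).map Sum.inr ++ (mToList α).map Sum.inl)
      (fun p : Eu d × Eu d => f p.1 p.2) (x, y) := by
  rw [ddv_append, ddv_map, ddv_map, ddv_inl _ (smooth_ddv _ _ hf)]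
  simp only [ddv_inr _ hf]
  rfl

theorem D2_le {d : ℕ} (α β : Fin d → ℕ) {f : Eu d → Eu d → ℝ}
    (hf : ContDiff ℝ (⊤ : ℕ∞) fun p : Eu d × Eu d => f p.1 p.2) (x y : Eu d) :
    |D2 α β f x y| ≤
      ‖iteratedFDeriv ℝ (mlen α + mlen β) (fun p : Eu d × Eu d => f p.1 p.2) (x, y)‖ := by
  rw [D2_eq α β hf]
  refine (abs_ddv_le norm_v2 _ hf _).trans (le_of_eq ?_)
  rw [List.length_append, List.length_map, List.length_map, length_mToList, length_mToList,
    add_comm]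

theorem proj_norm_le {d : ℕ} (i : Fin d) :
    ‖(EuclideanSpace.proj i : Eu d →L[ℝ] ℝ)‖ ≤ 1 :=
  ContinuousLinearMap.opNorm_le_bound _ zero_le_one fun x => by
    simpa using PiLp.norm_apply_le x i

theorem basis1 {d : ℕ} (x : Eu d) :
    x = ∑ i, (EuclideanSpace.proj i : Eu d →L[ℝ] ℝ) x • EuclideanSpace.single i (1 : ℝ) := by
  ext j
  simp [Finset.sum_apply, Pi.single_apply]

theorem iter_le_one {d : ℕ} (k : ℕ) {f : Eu d → ℝ} (hf : ContDiff ℝ (⊤ : ℕ∞) f) (x : Eu d)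
    (M : ℝ) (hM : ∀ α : Fin d → ℕ, mlen α = k → (∀ i, α i ≤ k) → |pderivM α f x| ≤ M) :
    ‖iteratedFDeriv ℝ k f x‖ ≤ (d : ℝ) ^ k * M := by
  have := norm_iter_le (fun i => EuclideanSpace.single i (1 : ℝ))
    (fun i => (EuclideanSpace.proj i : Eu d →L[ℝ] ℝ)) proj_norm_le basis1 k hf x M
  rw [Fintype.card_fin] at this
  refine this fun l hl => ?_
  have hp : l.Perm (mToList fun i => l.count i) := by
    rw [List.perm_iff_count]; intro i; rw [count_mToList]
  rw [ddv_perm _ hp hf, ← pderivs_eq]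
  refine hM _ ?_ fun i => hl ▸ List.count_le_length
  rw [← length_mToList, ← hp.length_eq, hl]

theorem lawful_sum (d : ℕ) : LawfulBEq (Fin d ⊕ Fin d) where
  eq_of_beq {a b} h := by
    cases a <;> cases b <;> first
      | exact congrArg _ (eq_of_beq (α := Fin d) h)
      | exact absurd (show false = true from h) (by simp)
  rfl {a} := by
    cases a
    · exact beq_self_eq_true (α := Fin d) _
    · exact beq_self_eq_true (α := Fin d) _

theorem iter_le_two {d : ℕ} (k : ℕ) {f : Eu d → Eu d → ℝ}
    (hf : ContDiff ℝ (⊤ : ℕ∞) fun p : Eu d × Eu d => f p.1 p.2) (x y : Eu d)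
    (M : ℝ) (hM : ∀ α β : Fin d → ℕ, mlen α + mlen β = k → (∀ i, α i ≤ k) → (∀ i, β i ≤ k) →
      |D2 α β f x y| ≤ M) :
    ‖iteratedFDeriv ℝ k (fun p : Eu d × Eu d => f p.1 p.2) (x, y)‖ ≤ ((d + d : ℕ) : ℝ) ^ k * M := by
  have := norm_iter_le (v2 d)
    (Sum.elim (fun i => (EuclideanSpace.proj i : Eu d →L[ℝ] ℝ).comp
        (ContinuousLinearMap.fst ℝ (Eu d) (Eu d)))
      fun i => (EuclideanSpace.proj i : Eu d →L[ℝ] ℝ).comp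
        (ContinuousLinearMap.snd ℝ (Eu d) (Eu d))) ?_ ?_ k hf (x, y) M
  · have lw := lawful_sum d
    rw [Fintype.card_sum, Fintype.card_fin] at this
    refine this fun l hl => ?_
    have hp : l.Perm ((mToList fun i => l.count (Sum.inr i)).map Sum.inr ++
        (mToList fun i => l.count (Sum.inl i)).map Sum.inl) := by
      rw [List.perm_iff_count]
      rintro (i | i)
      · have h0 : List.count (Sum.inl i : Fin d ⊕ Fin d)
            ((mToList fun i => l.count (Sum.inr i)).map Sum.inr) = 0 :=
          List.count_eq_zero_of_not_mem (by simp)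
        rw [List.count_append, h0, List.count_map_of_injective _ _ Sum.inl_injective,
          count_mToList, zero_add]
      · have h0 : List.count (Sum.inr i : Fin d ⊕ Fin d)
            ((mToList fun i => l.count (Sum.inl i)).map Sum.inl) = 0 :=
          List.count_eq_zero_of_not_mem (by simp)
        rw [List.count_append, h0, List.count_map_of_injective _ _ Sum.inr_injective,
          count_mToList, add_zero]
    rw [ddv_perm _ hp hf, ← D2_eq _ _ hf]
    refine hM _ _ ?_ (fun i => hl ▸ List.count_le_length) fun i => hl ▸ List.count_le_length
    have := hp.length_eq
    rw [List.length_append, List.length_map, List.length_map, length_mToList, length_mToList,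
      hl] at this
    rw [this, add_comm]
  · rintro (i | i)
    · refine (ContinuousLinearMap.opNorm_comp_le _ _).trans ?_
      exact mul_le_one₀ (proj_norm_le i) (norm_nonneg _) (ContinuousLinearMap.norm_fst_le ..)
    · refine (ContinuousLinearMap.opNorm_comp_le _ _).trans ?_
      exact mul_le_one₀ (proj_norm_le i) (norm_nonneg _) (ContinuousLinearMap.norm_snd_le ..)
  · rintro ⟨a, b⟩
    rw [Fintype.sum_sum_type]
    have ha := basis1 a
    have hb := basis1 b
    ext1
    · simpa [v2, Prod.fst_sum] using ha
    · simpa [v2, Prod.snd_sum] using hb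

theorem unif {A : Type} (Q : A → ℝ → ℝ → Prop)
    (hmono : ∀ a c₁ c₂ c₁' c₂', 0 ≤ c₁ → c₁ ≤ c₁' → c₂' ≤ c₂ → Q a c₁ c₂ → Q a c₁' c₂') (S : Finset A)
    (h : ∀ a, ∃ c₁ ≥ (0 : ℝ), ∃ c₂ > (0 : ℝ), Q a c₁ c₂) :
    ∃ c₁ ≥ (0 : ℝ), ∃ c₂ > (0 : ℝ), ∀ a ∈ S, Q a c₁ c₂ := by
  classical
  induction S using Finset.induction_on with
  | empty => exact ⟨0, le_rfl, 1, one_pos, by simp⟩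
  | insert a S _ ih =>
    obtain ⟨c₁, h1, c₂, h2, h3⟩ := ih
    obtain ⟨e₁, k1, e₂, k2, k3⟩ := h a
    refine ⟨max c₁ e₁, le_max_of_le_left h1, min c₂ e₂, lt_min h2 k2, fun b hb => ?_⟩
    rcases Finset.mem_insert.1 hb with rfl | hb
    · exact hmono _ _ _ _ _ k1 (le_max_right _ _) (min_le_right _ _) k3
    · exact hmono _ _ _ _ _ h1 (le_max_left _ _) (min_le_left _ _) (h3 b hb)

/-- Quantitative membership in `𝒢`, up to order `n`. -/
def GB {d : ℕ} (n : ℕ) (P : Eu d → Eu d → ℝ) (t c e : ℝ) : Prop :=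
  (∀ p : Eu d × Eu d, Bd n (fun p : Eu d × Eu d => P p.1 p.2) p
    (c * t ^ (-((n + d : ℕ) : ℝ) / 2) * Real.exp (-e * ‖p.1 - p.2‖ ^ 2 / t))) ∧
  ∀ x y, Bd n (fun x' => P x' (x' + Real.sqrt t • y)) x
    (c * t ^ (-(d : ℝ) / 2) * Real.exp (-e * ‖y‖ ^ 2))

theorem GB_of {d : ℕ} (B : Set (ℝ → Eu d → Eu d → ℝ))
    (hsmooth : ∀ P ∈ B, ∀ t ∈ Set.Ioc (0:ℝ) 1,
      ContDiff ℝ (⊤ : ℕ∞) fun p : Eu d × Eu d => P t p.1 p.2)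
    (hG : ∀ α β : Fin d → ℕ, ∃ c₁ ≥ (0:ℝ), ∃ c₂ > (0:ℝ), ∀ P ∈ B,
      ∀ t ∈ Set.Ioc (0:ℝ) 1, ∀ x y : Eu d,
        |D2 α β (P t) x y| ≤ c₁ * t ^ (-((mlen α + mlen β + d : ℕ) : ℝ) / 2) *
            Real.exp (-c₂ * ‖x - y‖ ^ 2 / t) ∧
        |pderivM α (fun x' => P t x' (x' + Real.sqrt t • y)) x| ≤
          c₁ * t ^ (-(d : ℝ) / 2) * Real.exp (-c₂ * ‖y‖ ^ 2)) (n : ℕ) :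
    ∃ c ≥ (0 : ℝ), ∃ e > (0 : ℝ), ∀ P ∈ B, ∀ t ∈ Set.Ioc (0:ℝ) 1, GB n (P t) t c e := by
  obtain ⟨c₁, hc₁, c₂, hc₂, h⟩ := unif (fun (ab : (Fin d → ℕ) × (Fin d → ℕ)) c₁ c₂ => ∀ P ∈ B,
      ∀ t ∈ Set.Ioc (0:ℝ) 1, ∀ x y : Eu d,
        |D2 ab.1 ab.2 (P t) x y| ≤ c₁ * t ^ (-((mlen ab.1 + mlen ab.2 + d : ℕ) : ℝ) / 2) *
            Real.exp (-c₂ * ‖x - y‖ ^ 2 / t) ∧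
        |pderivM ab.1 (fun x' => P t x' (x' + Real.sqrt t • y)) x| ≤
          c₁ * t ^ (-(d : ℝ) / 2) * Real.exp (-c₂ * ‖y‖ ^ 2)) (by
      intro ab c₁ c₂ c₁' c₂' h0 h1 h2 h P hP t ht x y
      obtain ⟨a1, a2⟩ := h P hP t ht x y
      have ht0 : 0 < t := ht.1
      have h0' : 0 ≤ c₁' := h0.trans h1
      refine ⟨a1.trans ?_, a2.trans ?_⟩ <;> gcongr)
    (Finset.Iic (fun _ => n) ×ˢ Finset.Iic (fun _ => n)) fun ab => hG ab.1 ab.2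
  refine ⟨((d + d : ℕ) + 1 : ℝ) ^ n * c₁, by positivity, c₂, hc₂, fun P hP t ht => ⟨?_, ?_⟩⟩
  · rintro ⟨x, y⟩ k hk
    have ht0 : 0 < t := ht.1
    refine (iter_le_two k (hsmooth P hP t ht) x y
      (c₁ * t ^ (-((n + d : ℕ) : ℝ) / 2) * Real.exp (-c₂ * ‖x - y‖ ^ 2 / t)) ?_).trans ?_
    · intro α β hαβ hα hβ
      refine (h (α, β) (by
        simp only [Finset.mem_product, Finset.mem_Iic]
        exact ⟨fun i => (hα i).trans hk, fun i => (hβ i).trans hk⟩) P hP t ht x y).1.trans ?_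
      have : t ^ (-((mlen α + mlen β + d : ℕ) : ℝ) / 2) ≤ t ^ (-((n + d : ℕ) : ℝ) / 2) := by
        refine Real.rpow_le_rpow_of_exponent_ge ht0 ht.2 ?_
        have : ((mlen α + mlen β + d : ℕ) : ℝ) ≤ ((n + d : ℕ) : ℝ) := by
          exact_mod_cast (by omega)
        linarith
      gcongr
    · have : ((d + d : ℕ) : ℝ) ^ k ≤ ((d + d : ℕ) + 1 : ℝ) ^ n :=
        (pow_le_pow_left₀ (by positivity) (by linarith) k).trans
          (pow_le_pow_right₀ (by linarith [Nat.cast_nonneg (α := ℝ) (d + d)]) hk)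
      rw [mul_assoc, mul_assoc, mul_assoc]
      gcongr
  · intro x y k hk
    have ht0 : 0 < t := ht.1
    refine (iter_le_one k ?_ x (c₁ * t ^ (-(d : ℝ) / 2) * Real.exp (-c₂ * ‖y‖ ^ 2)) ?_).trans ?_
    · exact (hsmooth P hP t ht).comp (g := fun p : Eu d × Eu d => P t p.1 p.2)
        (f := fun x' : Eu d => (x', x' + Real.sqrt t • y)) (by fun_prop)
    · intro α _ hα
      exact (h (α, 0) (by
        simp only [Finset.mem_product, Finset.mem_Iic]
        exact ⟨fun i => (hα i).trans hk, fun i => Nat.zero_le _⟩) P hP t ht x y).2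
    · have : (d : ℝ) ^ k ≤ ((d + d : ℕ) + 1 : ℝ) ^ n :=
        (pow_le_pow_left₀ (by positivity) (by push_cast; linarith [Nat.cast_nonneg (α := ℝ) d]) k).trans
          (pow_le_pow_right₀ (by linarith [Nat.cast_nonneg (α := ℝ) (d + d)]) hk)
      rw [mul_assoc, mul_assoc, mul_assoc]
      gcongr

theorem gB_of {d : ℕ} {g : Eu d → ℝ} (hg : ContDiff ℝ (⊤ : ℕ∞) g)
    (hgb : ∀ γ : Fin d → ℕ, ∃ C : ℝ, ∀ x, |pderivM γ g x| ≤ C) (n : ℕ) :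
    ∃ C ≥ (0 : ℝ), ∀ x, Bd n g x C := by
  obtain ⟨c₁, hc₁, c₂, hc₂, h⟩ := unif (fun (a : Fin d → ℕ) c₁ _ => ∀ x, |pderivM a g x| ≤ c₁)
    (fun a _ _ _ _ _ h1 _ h x => (h x).trans h1) (Finset.Iic (fun _ => n)) fun a => by
      obtain ⟨C, hC⟩ := hgb a
      exact ⟨max C 0, le_max_right _ _, 1, one_pos, fun x => (hC x).trans (le_max_left _ _)⟩
  refine ⟨((d : ℝ) + 1) ^ n * c₁, by positivity, fun x k hk => ?_⟩
  refine (iter_le_one k hg x c₁ fun α _ hα =>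
    h α (Finset.mem_Iic.2 fun i => (hα i).trans hk) x).trans ?_
  have : (d : ℝ) ^ k ≤ (d + 1 : ℝ) ^ n :=
    (pow_le_pow_left₀ (by positivity) (by linarith) k).trans
      (pow_le_pow_right₀ (by linarith [Nat.cast_nonneg (α := ℝ) d]) hk)
  gcongr

theorem sqrt_pow_mul_rpow {s : ℝ} (hs : 0 < s) (d : ℕ) (c u : ℝ) :
    |Real.sqrt s| ^ d * (c * s ^ (-(d : ℝ) / 2) * u) = c * u := by
  have : |Real.sqrt s| ^ d * s ^ (-(d : ℝ) / 2) = 1 := by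
    rw [abs_of_nonneg (Real.sqrt_nonneg s), Real.sqrt_eq_rpow, ← Real.rpow_natCast,
      ← Real.rpow_mul hs.le, ← Real.rpow_add hs]
    rw [show (1 : ℝ) / 2 * d + -d / 2 = 0 by ring, Real.rpow_zero]
  calc _ = (|Real.sqrt s| ^ d * s ^ (-(d : ℝ) / 2)) * (c * u) := by ring
    _ = _ := by rw [this, one_mul]

theorem half_rpow {r t : ℝ} (ht : 0 < t) (hr : t / 2 ≤ r) (m : ℕ) :
    r ^ (-(m : ℝ) / 2) ≤ 2 ^ m * t ^ (-(m : ℝ) / 2) := by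
  have hm : (0 : ℝ) ≤ m := Nat.cast_nonneg m
  calc r ^ (-(m : ℝ) / 2) ≤ (t / 2) ^ (-(m : ℝ) / 2) :=
        Real.rpow_le_rpow_of_nonpos (by positivity) hr (by linarith)
    _ = 2 ^ ((m : ℝ) / 2) * t ^ (-(m : ℝ) / 2) := by
        rw [Real.div_rpow ht.le (by norm_num), neg_div, Real.rpow_neg (by norm_num : (0:ℝ) ≤ 2)]
        field_simp
    _ ≤ _ := by
        have : (2 : ℝ) ^ ((m : ℝ) / 2) ≤ 2 ^ m := by
          rw [← Real.rpow_natCast]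
          exact Real.rpow_le_rpow_of_exponent_le (by norm_num) (by linarith)
        gcongr

theorem exp_le_one_aux {c a t : ℝ} (hc : 0 < c) (ht : 0 < t) :
    Real.exp (-c * a ^ 2 / t) ≤ 1 := by
  rw [Real.exp_le_one_iff]
  have : 0 ≤ c * a ^ 2 / t := by positivity
  have e : -c * a ^ 2 / t = -(c * a ^ 2 / t) := by ring
  linarith

/-- Common conclusion of the two cases. -/
def Concl {d : ℕ} (m : ℕ) (g : Eu d → ℝ) (U : Eu d × Eu d → ℝ) (P Q : Eu d → Eu d → ℝ)
    (s t : ℝ) : Prop :=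
  ContDiff ℝ (⊤ : ℕ∞) U ∧ ∀ (n : ℕ) (C c e : ℝ), 0 ≤ C → 0 ≤ c → 0 < e →
    (∀ x, Bd (n + m) g x C) → GB (n + m) P s c e → GB (n + m) Q (t - s) c e →
    ∀ x y, ‖iteratedFDeriv ℝ n U (x, y)‖ ≤
      2 ^ n * (2 ^ (n + m) * C * c * 2 ^ (n + m + d) * c) *
        (∫ w : Eu d, Real.exp (-(e / 2) * ‖w‖ ^ 2)) *
        t ^ (-((n + m + d : ℕ) : ℝ) / 2) * Real.exp (-(e / 2) * ‖x - y‖ ^ 2 / t)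

theorem int_nonneg {d : ℕ} (e : ℝ) : 0 ≤ ∫ w : Eu d, Real.exp (-(e / 2) * ‖w‖ ^ 2) :=
  integral_nonneg fun _ => (Real.exp_pos _).le

theorem caseA {d : ℕ} {g : Eu d → ℝ} (γ : Fin d → ℕ) {P Q : Eu d → Eu d → ℝ} {s t : ℝ}
    (hs : 0 < s) (hst : s ≤ t / 2) (hg : ContDiff ℝ (⊤ : ℕ∞) g)
    (hP : ContDiff ℝ (⊤ : ℕ∞) fun p : Eu d × Eu d => P p.1 p.2)
    (hQ : ContDiff ℝ (⊤ : ℕ∞) fun p : Eu d × Eu d => Q p.1 p.2)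
    (hgb : ∀ n, ∃ C ≥ (0 : ℝ), ∀ x, Bd n g x C)
    (hPQ : ∀ n, ∃ c ≥ (0 : ℝ), ∃ e > (0 : ℝ), GB n P s c e ∧ GB n Q (t - s) c e) :
    Concl (mlen γ) g (fun p : Eu d × Eu d =>
      ∫ z : Eu d, g z * (P p.1 z * pderivM γ (fun z' => Q z' p.2) z)) P Q s t := by
  have hτ : 0 < t - s := by linarith
  have ht0 : 0 < t := by linarith
  set L := mToList γ with hL
  have hlen : L.length = mlen γ := length_mToList γ
  set K : Eu d × Eu d → ℝ := ddv (fun i => v2 d (Sum.inl i)) L fun p => Q p.1 p.2 with hK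
  have hKs : ContDiff ℝ (⊤ : ℕ∞) K := smooth_ddv _ _ hQ
  set H : Eu d × Eu d → ℝ := fun p => g p.1 * K p with hH
  set F : Eu d → Eu d → ℝ := fun x w => |Real.sqrt s| ^ d * P x (x + Real.sqrt s • w) with hF
  have hU : (fun p : Eu d × Eu d =>
      ∫ z : Eu d, g z * (P p.1 z * pderivM γ (fun z' => Q z' p.2) z)) =
      fun p => ∫ w, H (p.1 + Real.sqrt s • w, p.2) * F p.1 w := by
    ext p
    rw [change_var _ p.1 (Real.sqrt_ne_zero'.2 hs)]
    congr 1
    ext w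
    have : K (p.1 + Real.sqrt s • w, p.2) =
        pderivM γ (fun z' => Q z' p.2) (p.1 + Real.sqrt s • w) := ddv_inl L hQ _ _
    simp only [hH, hF, this]
    ring
  have hFsm : ContDiff ℝ (⊤ : ℕ∞) fun p : Eu d × Eu d => P p.1 (p.1 + Real.sqrt s • p.2) :=
    hP.comp (g := fun p : Eu d × Eu d => P p.1 p.2)
      (f := fun p : Eu d × Eu d => (p.1, p.1 + Real.sqrt s • p.2)) (by fun_prop)
  have hFs : ContDiff ℝ (⊤ : ℕ∞) fun p : Eu d × Eu d => F p.1 p.2 := contDiff_const.mul hFsm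
  have hgf : ContDiff ℝ (⊤ : ℕ∞) fun p : Eu d × Eu d => g p.1 := hg.comp contDiff_fst
  have hHs : ContDiff ℝ (⊤ : ℕ∞) H := hgf.mul hKs
  have hHB : ∀ n C c e, (∀ x, Bd (n + mlen γ) g x C) → GB (n + mlen γ) Q (t - s) c e →
      ∀ p, Bd n H p (2 ^ n * (C * (c * (t - s) ^ (-((n + mlen γ + d : ℕ) : ℝ) / 2) *
        Real.exp (-e * ‖p.1 - p.2‖ ^ 2 / (t - s))))) := by
    intro n C c e h1 h2 p
    refine Bd.mul hgf hKs ?_ ?_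
    · exact Bd.comp_clm hg (ContinuousLinearMap.fst ℝ (Eu d) (Eu d))
        (ContinuousLinearMap.norm_fst_le ..) ((h1 _).mono (by omega) le_rfl)
    · refine Bd.ddv norm_v2_inl hQ ?_
      rw [hlen]
      exact h2.1 p
  have hFB : ∀ n m c e, 0 ≤ c → GB (n + m) P s c e → ∀ w x, Bd n (fun x => F x w) x
      (c * Real.exp (-e * ‖w‖ ^ 2)) := by
    intro n m c e hc h w x
    have h1 := (h.2 x w).const_mul (hFsm.comp (contDiff_id.prodMk contDiff_const))
      (|Real.sqrt s| ^ d)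
    rw [abs_of_nonneg (a := |Real.sqrt s| ^ d) (by positivity), sqrt_pow_mul_rpow hs] at h1
    exact h1.mono (by omega) le_rfl
  obtain ⟨hc1, hc2⟩ := core (σ := Real.sqrt s) (t := t) hτ
    (by rw [Real.sq_sqrt hs.le]; ring) hHs hFs
    (fun n => by
      obtain ⟨C, hC, hC'⟩ := hgb (n + mlen γ)
      obtain ⟨c, hc, e, he, h1, h2⟩ := hPQ (n + mlen γ)
      refine ⟨2 ^ n * (C * (c * (t - s) ^ (-((n + mlen γ + d : ℕ) : ℝ) / 2))), fun p =>
        (hHB n C c e hC' h2 p).mono le_rfl ?_⟩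
      have := exp_le_one_aux (a := ‖p.1 - p.2‖) he hτ
      have h3 : 0 ≤ c * (t - s) ^ (-((n + mlen γ + d : ℕ) : ℝ) / 2) := by positivity
      exact mul_le_mul_of_nonneg_left (mul_le_mul_of_nonneg_left
        (mul_le_of_le_one_right h3 this) hC) (by positivity))
    (fun n => by
      obtain ⟨c, hc, e, he, h1, h2⟩ := hPQ n
      exact ⟨c, e, he, hFB n 0 c e hc h1⟩)
  rw [hU]
  refine ⟨hc1, fun n C c e hC hc he h1 h2 h3 x y => ?_⟩
  refine (hc2 n (2 ^ n * (C * (c * (t - s) ^ (-((n + mlen γ + d : ℕ) : ℝ) / 2)))) c e he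
    (fun p => (hHB n C c e h1 h3 p).mono le_rfl (le_of_eq (by ring)))
    (hFB n _ c e hc h2) x y).trans ?_
  have hh := half_rpow ht0 (r := t - s) (by linarith) (n + mlen γ + d)
  have hp : (2 : ℝ) ^ n ≤ 2 ^ (n + mlen γ) := pow_le_pow_right₀ (by norm_num) (by omega)
  have hI := int_nonneg (d := d) e
  calc _ ≤ 2 ^ n * (2 ^ (n + mlen γ) * (C * (c * (2 ^ (n + mlen γ + d) *
        t ^ (-((n + mlen γ + d : ℕ) : ℝ) / 2)))) * c) *
        (∫ w : Eu d, Real.exp (-(e / 2) * ‖w‖ ^ 2)) *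
          Real.exp (-(e / 2) * ‖x - y‖ ^ 2 / t) := by gcongr
    _ = _ := by ring

theorem norm_swap_le (d : ℕ) : ‖(ContinuousLinearMap.snd ℝ (Eu d) (Eu d)).prod
    (ContinuousLinearMap.fst ℝ (Eu d) (Eu d))‖ ≤ 1 :=
  ContinuousLinearMap.opNorm_le_bound _ zero_le_one fun x => by
    simp [Prod.norm_def, max_comm]

theorem caseB {d : ℕ} {g : Eu d → ℝ} (γ : Fin d → ℕ) {P Q : Eu d → Eu d → ℝ} {s t : ℝ}
    (hs : t / 2 ≤ s) (hst : s < t) (ht0 : 0 < t) (hg : ContDiff ℝ (⊤ : ℕ∞) g)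
    (hP : ContDiff ℝ (⊤ : ℕ∞) fun p : Eu d × Eu d => P p.1 p.2)
    (hQ : ContDiff ℝ (⊤ : ℕ∞) fun p : Eu d × Eu d => Q p.1 p.2)
    (hgb : ∀ n, ∃ C ≥ (0 : ℝ), ∀ x, Bd n g x C)
    (hPQ : ∀ n, ∃ c ≥ (0 : ℝ), ∃ e > (0 : ℝ), GB n P s c e ∧ GB n Q (t - s) c e) :
    Concl (mlen γ) g (fun p : Eu d × Eu d =>
      ∫ z : Eu d, g z * (P p.1 z * pderivM γ (fun z' => Q z' p.2) z)) P Q s t := by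
  have hτ : 0 < t - s := by linarith
  have hs0 : 0 < s := by linarith
  set L := mToList γ with hL
  have hlen : L.length = mlen γ := length_mToList γ
  set S : Eu d × Eu d → ℝ := fun p => g p.2 * P p.1 p.2 with hS
  have hgf : ContDiff ℝ (⊤ : ℕ∞) fun p : Eu d × Eu d => g p.2 := hg.comp contDiff_snd
  have hSs : ContDiff ℝ (⊤ : ℕ∞) S := hgf.mul hP
  have hSB : ∀ n C c e, (∀ x, Bd n g x C) → GB n P s c e →
      ∀ p, Bd n S p (2 ^ n * (C * (c * s ^ (-((n + d : ℕ) : ℝ) / 2) *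
        Real.exp (-e * ‖p.1 - p.2‖ ^ 2 / s)))) := by
    intro n C c e h1 h2 p
    refine Bd.mul hgf hP ?_ (h2.1 p)
    exact Bd.comp_clm hg (ContinuousLinearMap.snd ℝ (Eu d) (Eu d))
        (ContinuousLinearMap.norm_snd_le ..) (h1 _)
  have hSB' : ∀ n, ∃ A, ∀ p, Bd n S p A := by
    intro n
    obtain ⟨C, hC, hC'⟩ := hgb n
    obtain ⟨c, hc, e, he, h1, h2⟩ := hPQ n
    refine ⟨2 ^ n * (C * (c * s ^ (-((n + d : ℕ) : ℝ) / 2))), fun p =>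
      (hSB n C c e hC' h1 p).mono le_rfl ?_⟩
    have := exp_le_one_aux (a := ‖p.1 - p.2‖) he hs0
    have h3 : 0 ≤ c * s ^ (-((n + d : ℕ) : ℝ) / 2) := by positivity
    exact mul_le_mul_of_nonneg_left (mul_le_mul_of_nonneg_left
      (mul_le_of_le_one_right h3 this) hC) (by positivity)
  set R : Eu d × Eu d → ℝ := ddv (fun i => v2 d (Sum.inr i)) L.reverse S with hR
  have hRs : ContDiff ℝ (⊤ : ℕ∞) R := smooth_ddv _ _ hSs
  set sw := (ContinuousLinearMap.snd ℝ (Eu d) (Eu d)).prod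
    (ContinuousLinearMap.fst ℝ (Eu d) (Eu d)) with hsw
  set H : Eu d × Eu d → ℝ := fun p => (-1) ^ mlen γ * R (sw p) with hH
  have hRsw : ContDiff ℝ (⊤ : ℕ∞) fun p => R (sw p) := hRs.comp sw.contDiff
  have hHs : ContDiff ℝ (⊤ : ℕ∞) H := contDiff_const.mul hRsw
  have hHbd : ∀ n p A, Bd (n + mlen γ) S (sw p) A → Bd n H p A := by
    intro n p A h
    have h1 : Bd n R (sw p) A := Bd.ddv norm_v2_inr hSs (by
      rw [List.length_reverse, hlen]; exact h)
    have h2 := (Bd.comp_clm hRs sw (norm_swap_le d) h1).const_mul hRsw ((-1) ^ mlen γ)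
    rwa [abs_pow, abs_neg, abs_one, one_pow, one_mul] at h2
  set σ := -Real.sqrt (t - s) with hσ
  have hσ0 : σ ≠ 0 := neg_ne_zero.2 (Real.sqrt_ne_zero'.2 hτ)
  have hσa : |σ| = |Real.sqrt (t - s)| := abs_neg _
  set F : Eu d → Eu d → ℝ := fun y w => |σ| ^ d * Q (y + σ • w) y with hF
  have hFsm : ContDiff ℝ (⊤ : ℕ∞) fun p : Eu d × Eu d => Q (p.1 + σ • p.2) p.1 :=
    hQ.comp (g := fun p : Eu d × Eu d => Q p.1 p.2)
      (f := fun p : Eu d × Eu d => (p.1 + σ • p.2, p.1)) (by fun_prop)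
  have hFs : ContDiff ℝ (⊤ : ℕ∞) fun p : Eu d × Eu d => F p.1 p.2 := contDiff_const.mul hFsm
  have hFB : ∀ n m c e, 0 ≤ c → GB (n + m) Q (t - s) c e → ∀ w x, Bd n (fun x => F x w) x
      (c * Real.exp (-e * ‖w‖ ^ 2)) := by
    intro n m c e hc h w x
    have h0 := (h.2 (x + σ • w) w).comp_add
    have e0 : (fun y => (fun x' => Q x' (x' + Real.sqrt (t - s) • w)) (y + σ • w)) =
        fun y => Q (y + σ • w) y := by
      ext y
      have : y + σ • w + Real.sqrt (t - s) • w = y := by rw [hσ, neg_smul]; abel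
      simp only [this]
    rw [e0] at h0
    have h1 := h0.const_mul (hFsm.comp (f := fun y : Eu d => (y, w))
      (contDiff_id.prodMk contDiff_const)) (|σ| ^ d)
    rw [abs_of_nonneg (a := |σ| ^ d) (by positivity), hσa, sqrt_pow_mul_rpow hτ] at h1
    rw [← hσa] at h1
    exact h1.mono (by omega) le_rfl
  have hU : (fun p : Eu d × Eu d =>
      ∫ z : Eu d, g z * (P p.1 z * pderivM γ (fun z' => Q z' p.2) z)) =
      fun p => (fun p : Eu d × Eu d => ∫ w, H (p.1 + σ • w, p.2) * F p.1 w) (sw p) := by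
    ext ⟨x, y⟩
    have hib := ibp L (fun z => S (x, z)) (fun z => Q z y)
      (hSs.comp (contDiff_const.prodMk contDiff_id))
      (hQ.comp (g := fun p : Eu d × Eu d => Q p.1 p.2) (f := fun z : Eu d => (z, y))
        (contDiff_id.prodMk contDiff_const))
      (fun k => by
        obtain ⟨A, hA⟩ := hSB' k
        refine ⟨A, fun z => ?_⟩
        have h1 : Bd k (fun p : Eu d × Eu d => S (p + (x, 0))) (ContinuousLinearMap.inr ℝ _ _ z) A :=
          (hA _).comp_add
        have h2 := Bd.comp_clm (hSs.comp (contDiff_id.add contDiff_const))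
          (ContinuousLinearMap.inr ℝ (Eu d) (Eu d)) (ContinuousLinearMap.norm_inr_le_one ..)
          h1 k le_rfl
        simpa using h2)
      (fun k => by
        obtain ⟨c, hc, e, he, h1, h2⟩ := hPQ k
        refine ⟨fun z => c * (t - s) ^ (-((k + d : ℕ) : ℝ) / 2) *
          Real.exp (-(e / (t - s)) * ‖z - y‖ ^ 2), ?_, fun z => ?_⟩
        · exact ((gauss_integrable (div_pos he hτ)).comp_sub_right y).const_mul _
        · have h3 : Bd k (fun p : Eu d × Eu d => (fun p : Eu d × Eu d => Q p.1 p.2) (p + (0, y)))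
              (ContinuousLinearMap.inl ℝ _ _ z) _ :=
            (h2.1 (ContinuousLinearMap.inl ℝ _ _ z + (0, y))).comp_add
          have h4 := Bd.comp_clm (hQ.comp (contDiff_id.add contDiff_const))
            (ContinuousLinearMap.inl ℝ (Eu d) (Eu d)) (ContinuousLinearMap.norm_inl_le_one ..)
            h3 k le_rfl
          have e1 : -(e / (t - s)) * ‖z - y‖ ^ 2 = -e * ‖z - y‖ ^ 2 / (t - s) := by ring
          beta_reduce
          rw [e1]
          simpa using h4)
    have e1 : ∫ z : Eu d, g z * (P x z * pderivM γ (fun z' => Q z' y) z) =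
        ∫ z, S (x, z) * ddv (fun i => EuclideanSpace.single i (1 : ℝ)) L (fun z => Q z y) z := by
      congr 1
      ext z
      rw [← pderivs_eq, hS, mul_assoc]
      rfl
    show ∫ z : Eu d, g z * (P x z * pderivM γ (fun z' => Q z' y) z) =
      ∫ w, H (y + σ • w, x) * F y w
    rw [e1, hib, change_var _ y hσ0, ← integral_const_mul]
    congr 1
    ext w
    have e2 : R (x, y + σ • w) = ddv (fun i => EuclideanSpace.single i (1 : ℝ)) L.reverse
        (fun z => S (x, z)) (y + σ • w) := by
      rw [← pderivs_eq]
      exact ddv_inr L.reverse hSs _ _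
    have e3 : H (y + σ • w, x) = (-1) ^ mlen γ * R (x, y + σ • w) := rfl
    rw [e3, e2, hlen]
    simp only [hF]
    ring
  obtain ⟨hc1, hc2⟩ := core (σ := σ) (t := t) hs0
    (by rw [hσ, neg_sq, Real.sq_sqrt hτ.le]; ring) hHs hFs
    (fun n => by
      obtain ⟨A, hA⟩ := hSB' (n + mlen γ)
      exact ⟨A, fun p => hHbd n p A (hA _)⟩)
    (fun n => by
      obtain ⟨c, hc, e, he, h1, h2⟩ := hPQ n
      exact ⟨c, e, he, hFB n 0 c e hc h2⟩)
  rw [hU]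
  refine ⟨hc1.comp sw.contDiff, fun n C c e hC hc he h1 h2 h3 x y => ?_⟩
  have hn : ‖iteratedFDeriv ℝ n (fun p =>
      (fun p : Eu d × Eu d => ∫ w, H (p.1 + σ • w, p.2) * F p.1 w) (sw p)) (x, y)‖ ≤
      ‖iteratedFDeriv ℝ n (fun p : Eu d × Eu d => ∫ w, H (p.1 + σ • w, p.2) * F p.1 w)
        (y, x)‖ := by
    have := sw.iteratedFDeriv_comp_right hc1 (x, y) (i := n) (by exact_mod_cast le_top)
    refine (congrArg norm this).le.trans ?_
    refine (ContinuousMultilinearMap.norm_compContinuousLinearMap_le _ _).trans ?_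
    refine mul_le_of_le_one_right (norm_nonneg _) ?_
    exact Finset.prod_le_one (fun _ _ => norm_nonneg _) fun _ _ => norm_swap_le d
  refine hn.trans ?_
  refine (hc2 n (2 ^ (n + mlen γ) * (C * (c * s ^ (-((n + mlen γ + d : ℕ) : ℝ) / 2)))) c e he
    (fun p => hHbd n p _ ((hSB _ C c e h1 h2 (sw p)).mono le_rfl (le_of_eq ?_)))
    (hFB n _ c e hc h3) y x).trans ?_
  · have : ‖(sw p).1 - (sw p).2‖ = ‖p.1 - p.2‖ := norm_sub_rev _ _
    rw [this]; ring
  have hh := half_rpow ht0 (r := s) (by linarith) (n + mlen γ + d)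
  have hI := int_nonneg (d := d) e
  rw [norm_sub_rev y x]
  calc _ ≤ 2 ^ n * (2 ^ (n + mlen γ) * (C * (c * (2 ^ (n + mlen γ + d) *
        t ^ (-((n + mlen γ + d : ℕ) : ℝ) / 2)))) * c) *
        (∫ w : Eu d, Real.exp (-(e / 2) * ‖w‖ ^ 2)) *
          Real.exp (-(e / 2) * ‖x - y‖ ^ 2 / t) := by gcongr
    _ = _ := by ring

end Helpers

/-- Proposition 5 (i): if `B₁, B₂` are bounded subsets of `𝒢(ℝ^d)` and `g ∈ C_b^∞(ℝ^d)`,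
`γ ∈ ℕ^d`, then `{π₁ *_{g,γ} π₂ | π₁ ∈ B₁, π₂ ∈ B₂}` is a bounded subset of `𝓗_{|γ|}(ℝ^d)`. -/
theorem statement0 (d : ℕ) (hd : 1 ≤ d)
    (g : Eu d → ℝ) (hg : ContDiff ℝ (⊤ : ℕ∞) g)
    (hgb : ∀ γ : Fin d → ℕ, ∃ C : ℝ, ∀ x, |pderivM γ g x| ≤ C)
    (γ : Fin d → ℕ)
    (B₁ B₂ : Set (ℝ → Eu d → Eu d → ℝ))
    -- the members of `B₁ ∪ B₂` are measurable in `(t,x,y)`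
    (hmeas : ∀ P ∈ B₁ ∪ B₂, Measurable fun p : ℝ × Eu d × Eu d => P p.1 p.2.1 p.2.2)
    -- and infinitely differentiable in `(x,y)` for every `t ∈ (0,1]`
    (hsmooth : ∀ P ∈ B₁ ∪ B₂, ∀ t ∈ Set.Ioc (0:ℝ) 1,
      ContDiff ℝ (⊤ : ℕ∞) fun p : Eu d × Eu d => P t p.1 p.2)
    -- `B₁` and `B₂` are bounded subsets of `𝒢(ℝ^d)`
    (hG : ∀ α β : Fin d → ℕ, ∃ c₁ ≥ (0:ℝ), ∃ c₂ > (0:ℝ), ∀ P ∈ B₁ ∪ B₂,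
      ∀ t ∈ Set.Ioc (0:ℝ) 1, ∀ x y : Eu d,
        |D2 α β (P t) x y| ≤ c₁ * t ^ (-((mlen α + mlen β + d : ℕ) : ℝ) / 2) *
            Real.exp (-c₂ * ‖x - y‖ ^ 2 / t) ∧
        |pderivM α (fun x' => P t x' (x' + Real.sqrt t • y)) x| ≤
          c₁ * t ^ (-(d : ℝ) / 2) * Real.exp (-c₂ * ‖y‖ ^ 2)) :
    -- conclusion: the convolutions form a bounded subset of `𝓗_{|γ|}(ℝ^d)`
    (∀ P₁ ∈ B₁, ∀ P₂ ∈ B₂, ∀ s t : ℝ, 0 < s → s < t → t ≤ 1 →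
      ContDiff ℝ (⊤ : ℕ∞) fun p : Eu d × Eu d => convG g γ P₁ P₂ s t p.1 p.2) ∧
    (∀ α β : Fin d → ℕ, ∃ c₁ ≥ (0:ℝ), ∃ c₂ > (0:ℝ), ∀ P₁ ∈ B₁, ∀ P₂ ∈ B₂,
      ∀ s t : ℝ, 0 < s → s < t → t ≤ 1 → ∀ x y : Eu d,
        |D2 α β (convG g γ P₁ P₂ s t) x y| ≤
          c₁ * t ^ (-((mlen α + mlen β + d + mlen γ : ℕ) : ℝ) / 2) *
            Real.exp (-c₂ * ‖x - y‖ ^ 2 / t)) := by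
  have hgB := gB_of hg hgb
  have hGB := GB_of (B₁ ∪ B₂) hsmooth hG
  have hmain : ∀ P₁ ∈ B₁, ∀ P₂ ∈ B₂, ∀ s t : ℝ, 0 < s → s < t → t ≤ 1 →
      Concl (mlen γ) g (fun p : Eu d × Eu d => convG g γ P₁ P₂ s t p.1 p.2)
        (P₁ s) (P₂ (t - s)) s t := by
    intro P₁ h1 P₂ h2 s t hs hst ht
    have m1 : s ∈ Set.Ioc (0:ℝ) 1 := ⟨hs, by linarith⟩
    have m2 : t - s ∈ Set.Ioc (0:ℝ) 1 := ⟨by linarith, by linarith⟩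
    have hPQ : ∀ n, ∃ c ≥ (0 : ℝ), ∃ e > (0 : ℝ), GB n (P₁ s) s c e ∧
        GB n (P₂ (t - s)) (t - s) c e := by
      intro n
      obtain ⟨c, hc, e, he, h⟩ := hGB n
      exact ⟨c, hc, e, he, h P₁ (Or.inl h1) s m1, h P₂ (Or.inr h2) _ m2⟩
    rcases le_total s (t / 2) with h | h
    · exact caseA γ hs h hg (hsmooth P₁ (Or.inl h1) s m1) (hsmooth P₂ (Or.inr h2) _ m2) hgB hPQ
    · exact caseB γ h hst (hs.trans hst) hg (hsmooth P₁ (Or.inl h1) s m1)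
        (hsmooth P₂ (Or.inr h2) _ m2) hgB hPQ
  refine ⟨fun P₁ h1 P₂ h2 s t hs hst ht => (hmain P₁ h1 P₂ h2 s t hs hst ht).1, fun α β => ?_⟩
  set n := mlen α + mlen β with hn
  obtain ⟨C, hC, hC'⟩ := hgB (n + mlen γ)
  obtain ⟨c, hc, e, he, h⟩ := hGB (n + mlen γ)
  have hI := int_nonneg (d := d) e
  refine ⟨2 ^ n * (2 ^ (n + mlen γ) * C * c * 2 ^ (n + mlen γ + d) * c) *
    (∫ w : Eu d, Real.exp (-(e / 2) * ‖w‖ ^ 2)), by positivity, e / 2, half_pos he, ?_⟩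
  intro P₁ h1 P₂ h2 s t hs hst ht x y
  obtain ⟨k1, k2⟩ := hmain P₁ h1 P₂ h2 s t hs hst ht
  refine (D2_le α β k1 x y).trans ?_
  have := k2 n C c e hC hc he hC' (h P₁ (Or.inl h1) s ⟨hs, by linarith⟩)
    (h P₂ (Or.inr h2) (t - s) ⟨by linarith, by linarith⟩) x y
  rw [show n + d + mlen γ = n + mlen γ + d by omega]
  exact this
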